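/- Let X be a finite-dimensional normed space admitting a (1, D, τ₁, τ₂, +∞)-threshold map into a Hilbert space, with D > 1, 0 < τ₁ < τ₂, and τ₂ > 8τ₁. Then there exists a map h from X to a Hilbert space such that for all x₁, x₂ ∈ X: (√τ₂ − √(8τ₁)) · min(1, ‖x₁-x₂‖/(2D+4)) ≤ ‖h(x₁) − h(x₂)‖ ≤ √(2τ₁‖x₁-x₂‖). In particular h is a uniform embedding of X into a Hilbert space with moduli depending only on τ₁, τ₂, D. -/

import Mathlib

universe u

theorem aux_psd_rep {Y : Type u} (k : Y → Y → ℝ) (hs : ∀ x y, k x y = k y x)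
    (pos : ∀ (n : ℕ) (x : Fin n → Y) (c : Fin n → ℝ),
      0 ≤ ∑ i, ∑ j, c i * c j * k (x i) (x j)) :
    ∃ (H : Type u) (_ : NormedAddCommGroup H) (_ : InnerProductSpace ℝ H)
      (_ : CompleteSpace H) (g : Y → H), ∀ x y, inner ℝ (g x) (g y) = k x y := by
  let core : PreInnerProductSpace.Core ℝ (Y →₀ ℝ) :=
    { inner := fun f g => f.sum fun x z => g.sum fun y w => z * w * k x y
      conj_inner_symm := fun f g => by
        rw [Finsupp.sum_comm]
        simp only [conj_trivial]
        refine Finset.sum_congr rfl fun a _ => Finset.sum_congr rfl fun b _ => ?_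
        simp only [hs b a]; ring
      add_left := fun f g h => by
        rw [Finsupp.sum_add_index'] <;> simp [← Finsupp.sum_add, add_mul]
      smul_left := fun f g r => by
        rw [Finsupp.sum_smul_index] <;> simp [Finsupp.mul_sum, ← mul_assoc]
      re_inner_nonneg := fun f => by
        have h := pos _ (fun i => ((f.support.equivFin.symm i : f.support) : Y))
          (fun i => f (f.support.equivFin.symm i))
        have e1 : ∀ F : Y → ℝ, ∑ i, F ((f.support.equivFin.symm i : f.support) : Y)
            = ∑ x ∈ f.support, F x := by
          intro F
          rw [Equiv.sum_comp f.support.equivFin.symm (fun x : f.support => F x)]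
          exact Finset.sum_coe_sort _ _
        simp only [RCLike.re_to_real]
        convert h using 1
        rw [e1 (fun x => ∑ j, f x * f ((f.support.equivFin.symm j : f.support) : Y) *
          k x ((f.support.equivFin.symm j : f.support) : Y))]
        refine Finset.sum_congr rfl fun x _ => ?_
        rw [e1 (fun y => f x * f y * k x y)]
        rfl }
  let i1 : SeminormedAddCommGroup (Y →₀ ℝ) :=
    InnerProductSpace.Core.toSeminormedAddCommGroup (𝕜 := ℝ)
  let i2 : InnerProductSpace ℝ (Y →₀ ℝ) := .ofCore core
  refine ⟨UniformSpace.Completion (Y →₀ ℝ), inferInstance, inferInstance, inferInstance,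
    fun x => ((Finsupp.single x 1 : Y →₀ ℝ) : UniformSpace.Completion (Y →₀ ℝ)), fun x y => ?_⟩
  rw [UniformSpace.Completion.inner_coe]
  change (Finsupp.single x (1:ℝ)).sum (fun x z => (Finsupp.single y (1:ℝ)).sum
    fun y w => z * w * k x y) = _
  simp

def AuxNeg {Y : Type u} (K : Y → Y → ℝ) : Prop :=
  ∀ (n : ℕ) (x : Fin n → Y) (c : Fin n → ℝ), ∑ i, c i = 0 →
    ∑ i, ∑ j, c i * c j * K (x i) (x j) ≤ 0

theorem aux_neg_rep {Y : Type u} (o : Y) (K : Y → Y → ℝ) (hs : ∀ x y, K x y = K y x)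
    (h0 : ∀ x, K x x = 0) (hK : AuxNeg K) :
    ∃ (H : Type u) (_ : NormedAddCommGroup H) (_ : InnerProductSpace ℝ H)
      (_ : CompleteSpace H) (g : Y → H), ∀ x y, ‖g x - g y‖ ^ 2 = K x y := by
  obtain ⟨H, i1, i2, i3, g, hg⟩ := aux_psd_rep (fun x y => (K x o + K y o - K x y) / 2)
    (fun x y => by rw [hs x y]; ring) (by
      intro n x c
      have h := hK (n + 1) (Fin.cons o x) (Fin.cons (- ∑ i, c i) c)
        (by simp [Fin.sum_univ_succ])
      simp only [Fin.sum_univ_succ, Fin.cons_zero, Fin.cons_succ, h0, hs o] at h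
      have e : ∑ i, ∑ j, c i * c j * ((K (x i) o + K (x j) o - K (x i) (x j)) / 2)
          = (∑ i, c i) * (∑ i, c i * K (x i) o)
            - (∑ i, ∑ j, c i * c j * K (x i) (x j)) / 2 := by
        have e1 : (∑ i, c i) * (∑ i, c i * K (x i) o)
          = ∑ i, ∑ j, c i * c j * K (x j) o := by
          rw [Finset.sum_mul_sum]; simp only [mul_assoc]
        have e2 : ∑ i, ∑ j, c i * c j * K (x j) o = ∑ i, ∑ j, c i * c j * K (x i) o := by
          rw [Finset.sum_comm]; simp only [mul_comm]
        have e3 : (∑ i, c i) * (∑ i, c i * K (x i) o)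
          = (∑ i, ∑ j, c i * c j * K (x i) o) / 2 + (∑ i, ∑ j, c i * c j * K (x j) o) / 2 := by
          rw [e1, e2]; ring
        rw [e3]
        simp only [Finset.sum_div, ← Finset.sum_add_distrib, ← Finset.sum_sub_distrib]
        refine Finset.sum_congr rfl fun i _ => Finset.sum_congr rfl fun j _ => ?_
        ring
      rw [e]
      have e4 : ∑ i, (- ∑ i, c i) * c i * K (x i) o = - ((∑ i, c i) * (∑ i, c i * K (x i) o)) := by
        rw [← neg_mul, Finset.mul_sum]
        exact Finset.sum_congr rfl fun i _ => by ring
      have e5 : ∑ i, c i * (- ∑ i, c i) * K (x i) o = - ((∑ i, c i) * (∑ i, c i * K (x i) o)) := by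
        rw [← e4]; exact Finset.sum_congr rfl fun i _ => by ring
      rw [Finset.sum_add_distrib, e4, e5] at h
      linarith)
  refine ⟨H, i1, i2, i3, g, fun x y => ?_⟩
  rw [norm_sub_sq_real, ← real_inner_self_eq_norm_sq, ← real_inner_self_eq_norm_sq, hg, hg, hg, h0, h0]
  ring
theorem aux_gram_pow {H : Type*} [NormedAddCommGroup H] [InnerProductSpace ℝ H] (m n : ℕ)
    (v : Fin n → H) (c : Fin n → ℝ) :
    0 ≤ ∑ i, ∑ j, c i * c j * (inner ℝ (v i) (v j)) ^ m := by
  have hp : (Matrix.of fun i j => (inner ℝ (v i) (v j)) ^ m : Matrix (Fin n) (Fin n) ℝ).PosSemidef := by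
    induction m with
    | zero =>
      have := Matrix.posSemidef_gram (𝕜 := ℝ) (fun _ : Fin n => (1 : ℝ))
      have e : (Matrix.of fun i j => (inner ℝ (v i) (v j)) ^ 0 : Matrix (Fin n) (Fin n) ℝ)
          = Matrix.gram ℝ (fun _ : Fin n => (1 : ℝ)) := by
        ext i j
        simp [Matrix.gram]
      rw [e]
      exact this
    | succ m ih =>
      have := ih.hadamard (Matrix.posSemidef_gram (𝕜 := ℝ) v)
      have e : (Matrix.of fun i j => (inner ℝ (v i) (v j)) ^ (m + 1) : Matrix (Fin n) (Fin n) ℝ)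
          = (Matrix.of fun i j => (inner ℝ (v i) (v j)) ^ m).hadamard (Matrix.gram ℝ v) := by
        ext i j
        simp [Matrix.gram, pow_succ]
      rw [e]
      exact this
  have h := hp.dotProduct_mulVec_nonneg c
  simp only [dotProduct, Matrix.mulVec, Finset.mul_sum, Matrix.of_apply, star_trivial] at h
  refine h.trans_eq (Finset.sum_congr rfl fun i _ => Finset.sum_congr rfl fun j _ => ?_)
  ring

theorem aux_gauss {H : Type*} [NormedAddCommGroup H] [InnerProductSpace ℝ H] (s : ℝ) (n : ℕ)
    (v : Fin n → H) (c : Fin n → ℝ) :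
    0 ≤ ∑ i, ∑ j, c i * c j * Real.exp (- (s ^ 2 * ‖v i - v j‖ ^ 2)) := by
  have e : ∀ i j, c i * c j * Real.exp (- (s ^ 2 * ‖v i - v j‖ ^ 2)) =
      (c i * Real.exp (- (s ^ 2 * ‖v i‖ ^ 2))) * (c j * Real.exp (- (s ^ 2 * ‖v j‖ ^ 2)))
        * Real.exp (2 * s ^ 2 * inner ℝ (v i) (v j)) := by
    intro i j
    rw [norm_sub_sq_real]
    rw [show - (s ^ 2 * (‖v i‖ ^ 2 - 2 * inner ℝ (v i) (v j) + ‖v j‖ ^ 2)) =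
      (- (s ^ 2 * ‖v i‖ ^ 2)) + (- (s ^ 2 * ‖v j‖ ^ 2)) + 2 * s ^ 2 * inner ℝ (v i) (v j) by ring,
      Real.exp_add, Real.exp_add]
    ring
  simp only [e]
  set b : Fin n → ℝ := fun i => c i * Real.exp (- (s ^ 2 * ‖v i‖ ^ 2)) with hb
  have hs : HasSum (fun m : ℕ => ∑ i, ∑ j, b i * b j *
      ((2 * s ^ 2 * inner ℝ (v i) (v j)) ^ m / (m.factorial : ℝ)))
      (∑ i, ∑ j, b i * b j * Real.exp (2 * s ^ 2 * inner ℝ (v i) (v j))) := by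
    refine hasSum_sum fun i _ => hasSum_sum fun j _ => HasSum.mul_left _ ?_
    rw [Real.exp_eq_exp_ℝ]
    exact NormedSpace.expSeries_div_hasSum_exp _
  refine hs.nonneg fun m => ?_
  have := aux_gram_pow m n v b
  have e2 : ∑ i, ∑ j, b i * b j * ((2 * s ^ 2 * inner ℝ (v i) (v j)) ^ m / (m.factorial : ℝ))
    = ((2 * s ^ 2) ^ m / (m.factorial : ℝ)) * ∑ i, ∑ j, b i * b j * (inner ℝ (v i) (v j)) ^ m := by
    simp only [Finset.mul_sum, mul_pow]
    exact Finset.sum_congr rfl fun i _ => Finset.sum_congr rfl fun j _ => by ring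
  rw [e2]
  positivity

theorem aux_phi_bound (w : ℝ) : 0 ≤ (1 - Real.exp (-w ^ 2)) / w ^ 2 ∧
    (1 - Real.exp (-w ^ 2)) / w ^ 2 ≤ 2 * (1 + w ^ 2)⁻¹ := by
  have h1 : Real.exp (-w ^ 2) ≤ 1 := Real.exp_le_one_iff.2 (by nlinarith)
  have h2 := Real.add_one_le_exp (-w ^ 2)
  have h3 := Real.exp_pos (-w ^ 2)
  refine ⟨div_nonneg (by linarith) (by positivity), ?_⟩
  rcases eq_or_ne w 0 with rfl | hw
  · simp
  · have : 0 < w ^ 2 := by positivity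
    rw [← div_eq_mul_inv, div_le_div_iff₀ this (by positivity)]
    nlinarith

theorem aux_phi_int : MeasureTheory.Integrable (fun w : ℝ => (1 - Real.exp (-w ^ 2)) / w ^ 2) := by
  refine (integrable_inv_one_add_sq.const_mul 2).mono' ?_ ?_
  · exact Measurable.aestronglyMeasurable (by fun_prop)
  · refine Filter.Eventually.of_forall fun w => ?_
    have := aux_phi_bound w
    rw [Real.norm_eq_abs, abs_of_nonneg this.1]
    exact this.2

theorem aux_phi_pos : 0 < ∫ w : ℝ, (1 - Real.exp (-w ^ 2)) / w ^ 2 := by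
  rw [MeasureTheory.integral_pos_iff_support_of_nonneg (fun w => (aux_phi_bound w).1) aux_phi_int]
  have : Set.Ioi (0:ℝ) ⊆ Function.support (fun w : ℝ => (1 - Real.exp (-w ^ 2)) / w ^ 2) := by
    intro w hw
    have hw : 0 < w := hw
    have : Real.exp (-w ^ 2) < 1 := Real.exp_lt_one_iff.2 (by have := pow_pos hw 2; linarith)
    have h2 : 0 < (1 - Real.exp (-w ^ 2)) / w ^ 2 := div_pos (by linarith) (by positivity)
    exact h2.ne'
  refine lt_of_lt_of_le ?_ (MeasureTheory.measure_mono this)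
  simp

theorem aux_norm_int (t : ℝ) (ht : 0 ≤ t) :
    MeasureTheory.Integrable (fun u : ℝ => t ^ 2 * ((1 - Real.exp (-(t * u) ^ 2)) / (t * u) ^ 2)) ∧
    ∫ u : ℝ, t ^ 2 * ((1 - Real.exp (-(t * u) ^ 2)) / (t * u) ^ 2)
      = t * ∫ w : ℝ, (1 - Real.exp (-w ^ 2)) / w ^ 2 := by
  rcases eq_or_lt_of_le ht with rfl | ht
  · simp
  constructor
  · exact (aux_phi_int.comp_mul_left' ht.ne').const_mul _
  · rw [MeasureTheory.integral_const_mul,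
      MeasureTheory.Measure.integral_comp_mul_left (fun w : ℝ => (1 - Real.exp (-w ^ 2)) / w ^ 2) t,
      abs_of_pos (inv_pos.2 ht), smul_eq_mul]
    field_simp

theorem aux_norm_neg {X : Type u} {H : Type*} [NormedAddCommGroup H] [InnerProductSpace ℝ H]
    (f : X → H) : AuxNeg (fun x y => ‖f x - f y‖) := by
  intro n x c hc
  set C := ∫ w : ℝ, (1 - Real.exp (-w ^ 2)) / w ^ 2 with hC
  have hpos : 0 < C := aux_phi_pos
  set N : Fin n → Fin n → ℝ := fun i j => ‖f (x i) - f (x j)‖ with hN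
  have key : (∑ i, ∑ j, c i * c j * N i j) * C =
      ∫ u : ℝ, ∑ i, ∑ j, c i * c j *
        (N i j ^ 2 * ((1 - Real.exp (-(N i j * u) ^ 2)) / (N i j * u) ^ 2)) := by
    rw [MeasureTheory.integral_finsetSum]
    · rw [Finset.sum_mul]
      refine Finset.sum_congr rfl fun i _ => ?_
      rw [MeasureTheory.integral_finsetSum, Finset.sum_mul]
      · refine Finset.sum_congr rfl fun j _ => ?_
        rw [MeasureTheory.integral_const_mul, (aux_norm_int _ (norm_nonneg _)).2]
        ring
      · intro j _
        exact (aux_norm_int _ (norm_nonneg _)).1.const_mul _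
    · intro i _
      refine MeasureTheory.integrable_finsetSum _ fun j _ => ?_
      exact (aux_norm_int _ (norm_nonneg _)).1.const_mul _
  have : (∑ i, ∑ j, c i * c j * N i j) * C ≤ 0 := by
    rw [key]
    refine MeasureTheory.integral_nonpos_of_ae ?_
    have hne : ∀ᵐ u : ℝ, u ≠ 0 := by
      simp [MeasureTheory.ae_iff]
    filter_upwards [hne] with u hu
    have hg := aux_gauss u n (fun i => f (x i)) c
    have e : ∀ i j, c i * c j *
        (N i j ^ 2 * ((1 - Real.exp (-(N i j * u) ^ 2)) / (N i j * u) ^ 2)) =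
        (c i * c j - c i * c j * Real.exp (- (u ^ 2 * ‖f (x i) - f (x j)‖ ^ 2))) / u ^ 2 := by
      intro i j
      change _ = (c i * c j - c i * c j * Real.exp (- (u ^ 2 * N i j ^ 2))) / u ^ 2
      rw [show -(N i j * u) ^ 2 = - (u ^ 2 * N i j ^ 2) by ring]
      rcases eq_or_ne (N i j) 0 with h | h
      · simp [h]
      · field_simp
    simp only [e, ← Finset.sum_div, Finset.sum_sub_distrib, ← Finset.mul_sum, ← Finset.sum_mul, hc]
    simp only [Pi.zero_apply]
    refine div_nonpos_of_nonpos_of_nonneg ?_ (by positivity)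
    linarith
  by_contra hcon
  push Not at hcon
  have := mul_pos hcon hpos
  linarith

theorem aux_onepoint {ι : Type*} [Fintype ι] {H : Type*} [NormedAddCommGroup H]
    [InnerProductSpace ℝ H] (y : ι → H) (d : ι → ℝ)
    (h : ∀ i j, ‖y i - y j‖ ^ 2 ≤ d i + d j) : ∃ z, ∀ i, ‖z - y i‖ ^ 2 ≤ d i := by
  classical
  rcases isEmpty_or_nonempty ι with hι | hι
  · exact ⟨0, fun i => hι.elim i⟩
  let G : (ι → ℝ) → ℝ := fun l => ∑ i, l i * (‖y i‖ ^ 2 - d i) - ‖∑ i, l i • y i‖ ^ 2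
  have hG : Continuous G := by fun_prop
  obtain ⟨l, hl, hmax⟩ := (isCompact_stdSimplex ℝ ι).exists_isMaxOn
    ⟨_, single_mem_stdSimplex ℝ (Classical.arbitrary ι)⟩ hG.continuousOn
  set z := ∑ i, l i • y i with hz
  set A := ∑ i, l i * (‖y i‖ ^ 2 - d i) with hA
  have hl1 : ∑ i, l i = 1 := hl.2
  have hdual : A - ‖z‖ ^ 2 ≤ 0 := by
    have hzz : ∑ i, l i * inner ℝ (y i) z = ‖z‖ ^ 2 := by
      rw [← real_inner_self_eq_norm_sq]
      conv_rhs => rw [hz]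
      rw [sum_inner]
      simp only [real_inner_smul_left]
      rw [← hz]
    have h1 : ∀ i, ∑ j, l j * ‖y i - y j‖ ^ 2 =
        ‖y i‖ ^ 2 - 2 * inner ℝ (y i) z + ∑ j, l j * ‖y j‖ ^ 2 := by
      intro i
      have e : inner ℝ (y i) z = ∑ j, l j * inner ℝ (y i) (y j) := by
        rw [hz, inner_sum]; simp only [real_inner_smul_right]
      have e2 : ‖y i‖ ^ 2 = ∑ j, l j * ‖y i‖ ^ 2 := by rw [← Finset.sum_mul, hl1, one_mul]
      rw [e, Finset.mul_sum, e2, ← Finset.sum_sub_distrib, ← Finset.sum_add_distrib]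
      refine Finset.sum_congr rfl fun j _ => ?_
      rw [norm_sub_sq_real]; ring
    have h2 : ∑ i, l i * ∑ j, l j * ‖y i - y j‖ ^ 2 =
        2 * ∑ j, l j * ‖y j‖ ^ 2 - 2 * ‖z‖ ^ 2 := by
      simp only [h1, mul_add, mul_sub, Finset.sum_add_distrib, Finset.sum_sub_distrib,
        ← Finset.sum_mul, hl1]
      have : ∑ i, l i * (2 * inner ℝ (y i) z) = 2 * ‖z‖ ^ 2 := by
        rw [← hzz, Finset.mul_sum]; exact Finset.sum_congr rfl fun i _ => by ring
      rw [this]; ring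
    have h3 : ∑ i, l i * ∑ j, l j * ‖y i - y j‖ ^ 2 ≤ ∑ i, l i * ∑ j, l j * (d i + d j) :=
      Finset.sum_le_sum fun i _ => mul_le_mul_of_nonneg_left
        (Finset.sum_le_sum fun j _ => mul_le_mul_of_nonneg_left (h i j) (hl.1 j)) (hl.1 i)
    have h4 : ∑ i, l i * ∑ j, l j * (d i + d j) = 2 * ∑ i, l i * d i := by
      simp only [mul_add, Finset.sum_add_distrib, ← Finset.sum_mul, hl1]
      ring
    have h5 : A = ∑ j, l j * ‖y j‖ ^ 2 - ∑ i, l i * d i := by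
      rw [hA, ← Finset.sum_sub_distrib]; exact Finset.sum_congr rfl fun i _ => by ring
    rw [h2, h4] at h3
    linarith
  refine ⟨z, fun b => ?_⟩
  set q := ‖y b - z‖ ^ 2 with hq
  have hfirst : ∀ t : ℝ, 0 < t → t ≤ 1 → q - d b + ‖z‖ ^ 2 - A ≤ t * q := by
    intro t ht0 ht1
    have hmem := (convex_stdSimplex ℝ ι) hl (single_mem_stdSimplex ℝ b)
      (sub_nonneg.2 ht1) ht0.le (by ring)
    have hle : G _ ≤ G l := hmax hmem
    have eG : G ((1 - t) • l + t • Pi.single b 1) =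
        (1 - t) * A + t * (‖y b‖ ^ 2 - d b) - ‖z + t • (y b - z)‖ ^ 2 := by
      have e1 : ∑ i, ((1 - t) • l + t • Pi.single b 1 : ι → ℝ) i • y i = z + t • (y b - z) := by
        simp only [Pi.add_apply, Pi.smul_apply, smul_eq_mul, add_smul, Finset.sum_add_distrib,
          mul_smul, ← Finset.smul_sum, ← hz]
        simp only [Pi.single_apply, ite_smul, one_smul, zero_smul, Finset.sum_ite_eq',
          Finset.mem_univ, if_true]
        module
      have e2 : ∑ i, ((1 - t) • l + t • Pi.single b 1 : ι → ℝ) i * (‖y i‖ ^ 2 - d i)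
          = (1 - t) * A + t * (‖y b‖ ^ 2 - d b) := by
        simp only [Pi.add_apply, Pi.smul_apply, smul_eq_mul, add_mul, Finset.sum_add_distrib,
          mul_assoc, ← Finset.mul_sum, ← hA]
        simp [Pi.single_apply]
      simp only [G, e1, e2]
    rw [eG] at hle
    have eL : G l = A - ‖z‖ ^ 2 := rfl
    rw [eL, norm_add_sq_real, norm_smul, mul_pow, ← hq, real_inner_smul_right, inner_sub_right,
      real_inner_self_eq_norm_sq, Real.norm_eq_abs, sq_abs] at hle
    have eq : q = ‖y b‖ ^ 2 - 2 * inner ℝ z (y b) + ‖z‖ ^ 2 := by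
      rw [hq, norm_sub_sq_real, real_inner_comm]
    have : t * (q - d b + ‖z‖ ^ 2 - A) ≤ t * (t * q) := by
      nlinarith
    exact le_of_mul_le_mul_left this ht0
  have hp : q - d b + ‖z‖ ^ 2 - A ≤ 0 := by
    by_contra hcon
    push Not at hcon
    set p := q - d b + ‖z‖ ^ 2 - A with hpdef
    have hq0 : 0 ≤ q := by positivity
    have h1 := hfirst (min 1 (p / (2 * (q + 1)))) (by positivity) (min_le_left _ _)
    have h2 : min 1 (p / (2 * (q + 1))) * q ≤ p / (2 * (q + 1)) * q :=
      mul_le_mul_of_nonneg_right (min_le_right _ _) hq0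
    have h3 : p / (2 * (q + 1)) * q ≤ p / 2 := by
      rw [div_mul_eq_mul_div, div_le_div_iff₀ (by positivity) (by positivity)]
      nlinarith
    linarith
  rw [norm_sub_rev]
  linarith

theorem aux_ext {X : Type*} [NormedAddCommGroup X] {H : Type*} [NormedAddCommGroup H]
    [InnerProductSpace ℝ H] [DecidableEq X] (c : ℝ) (hc : 0 ≤ c) (g : X → H) (A F : Finset X)
    (hA : ∀ a ∈ A, ∀ b ∈ A, ‖g a - g b‖ ^ 2 ≤ c * ‖a - b‖) :
    ∃ g' : X → H, (∀ a ∈ A, g' a = g a) ∧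
      ∀ a ∈ A ∪ F, ∀ b ∈ A ∪ F, ‖g' a - g' b‖ ^ 2 ≤ c * ‖a - b‖ := by
  induction F using Finset.induction_on with
  | empty => exact ⟨g, fun _ _ => rfl, by simpa using hA⟩
  | insert x F hx ih =>
    obtain ⟨g', h1, h2⟩ := ih
    by_cases hxA : x ∈ A
    · refine ⟨g', h1, ?_⟩
      have : A ∪ insert x F = A ∪ F := by
        ext t; simp only [Finset.mem_union, Finset.mem_insert]
        constructor
        · rintro (h | rfl | h) <;> tauto
        · tauto
      rw [this]; exact h2
    have hxAF : x ∉ A ∪ F := by simp [hx, hxA]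
    obtain ⟨z, hz⟩ := aux_onepoint (fun i : (A ∪ F : Finset X) => g' i)
      (fun i => c * ‖x - (i : X)‖) (by
        intro i j
        refine (h2 i i.2 j j.2).trans ?_
        rw [← mul_add]
        refine mul_le_mul_of_nonneg_left ?_ hc
        have := norm_sub_le_norm_sub_add_norm_sub (i : X) x j
        rwa [norm_sub_rev (i : X) x] at this)
    have hne : ∀ a ∈ A ∪ F, a ≠ x := fun a ha e => hxAF (e ▸ ha)
    refine ⟨Function.update g' x z, fun a ha => ?_, ?_⟩
    · rw [Function.update_of_ne (hne a (by simp [ha])), h1 a ha]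
    · intro a ha b hb
      rw [Finset.union_insert, Finset.mem_insert] at ha hb
      rcases ha with rfl | ha <;> rcases hb with rfl | hb
      · simp
      · rw [Function.update_self, Function.update_of_ne (hne b hb)]
        exact hz ⟨b, hb⟩
      · rw [Function.update_self, Function.update_of_ne (hne a ha), norm_sub_rev, norm_sub_rev a]
        exact hz ⟨a, ha⟩
      · rw [Function.update_of_ne (hne b hb), Function.update_of_ne (hne a ha)]
        exact h2 a ha b hb

theorem aux_net {X : Type*} [NormedAddCommGroup X] [DecidableEq X] (F : Finset X) :
    ∃ A ⊆ F, (∀ a ∈ A, ∀ b ∈ A, a ≠ b → 1 ≤ ‖a - b‖) ∧ ∀ x ∈ F, ∃ a ∈ A, ‖x - a‖ ≤ 1 := by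
  induction F using Finset.induction_on with
  | empty => exact ⟨∅, by simp⟩
  | insert x F hx ih =>
    obtain ⟨A, h1, h2, h3⟩ := ih
    by_cases h : ∃ a ∈ A, ‖x - a‖ ≤ 1
    · refine ⟨A, h1.trans (Finset.subset_insert _ _), h2, ?_⟩
      intro y hy
      rcases Finset.mem_insert.1 hy with rfl | hy
      · exact h
      · exact h3 y hy
    · push Not at h
      refine ⟨insert x A, Finset.insert_subset_insert _ h1, ?_, ?_⟩
      · intro a ha b hb hab
        rcases Finset.mem_insert.1 ha with rfl | ha' <;> rcases Finset.mem_insert.1 hb with rfl | hb'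
        · exact absurd rfl hab
        · exact (h b hb').le
        · rw [norm_sub_rev]; exact (h a ha').le
        · exact h2 a ha' b hb' hab
      · intro y hy
        rcases Finset.mem_insert.1 hy with rfl | hy
        · exact ⟨y, Finset.mem_insert_self _ _, by simp⟩
        · obtain ⟨a, ha, h⟩ := h3 y hy
          exact ⟨a, Finset.mem_insert_of_mem ha, h⟩

theorem aux_growth {X : Type*} [NormedAddCommGroup X] [NormedSpace ℝ X] {H : Type*}
    [NormedAddCommGroup H] (f : X → H) (τ : ℝ)
    (hf : ∀ x₁ x₂ : X, ‖x₁ - x₂‖ ≤ 1 → ‖f x₁ - f x₂‖ ≤ τ) (n : ℕ) :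
    ∀ x y : X, ‖x - y‖ ≤ n → ‖f x - f y‖ ≤ n * τ := by
  induction n with
  | zero =>
    intro x y h
    have : x = y := by
      rw [← sub_eq_zero, ← norm_le_zero_iff]; simpa using h
    simp [this]
  | succ n ih =>
    intro x y h
    push_cast at h ⊢
    have hn : (0:ℝ) < n + 1 := by positivity
    set z := x + ((1:ℝ) / (n + 1)) • (y - x) with hz
    have h1 : ‖x - z‖ ≤ 1 := by
      have : x - z = ((1:ℝ) / (n + 1)) • (x - y) := by rw [hz]; module
      rw [this, norm_smul, Real.norm_of_nonneg (by positivity), div_mul_eq_mul_div, one_mul,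
        div_le_one hn]
      exact h
    have h2 : ‖z - y‖ ≤ n := by
      have : z - y = ((n:ℝ) / (n + 1)) • (x - y) := by
        rw [show ((n:ℝ) / (n + 1)) = 1 - (1:ℝ) / (n + 1) by field_simp; ring, hz]; module
      rw [this, norm_smul, Real.norm_of_nonneg (by positivity), div_mul_eq_mul_div,
        div_le_iff₀ hn]
      exact mul_le_mul_of_nonneg_left h (by positivity)
    have := norm_sub_le_norm_sub_add_norm_sub (f x) (f z) (f y)
    have := hf _ _ h1
    have := ih _ _ h2
    linarith

/-- finite-level kernel -/
theorem aux_finite {X : Type u} [NormedAddCommGroup X] [NormedSpace ℝ X] [DecidableEq X]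
    (D τ₁ τ₂ : ℝ) (hτ0 : 0 < τ₁) (hτ8 : 8 * τ₁ < τ₂)
    {H : Type u} [NormedAddCommGroup H] [InnerProductSpace ℝ H] (g : X → H)
    (hup : ∀ x y : X, 1 ≤ ‖x - y‖ → ‖g x - g y‖ ^ 2 ≤ 2 * τ₁ * ‖x - y‖)
    (hlow : ∀ x y : X, D ≤ ‖x - y‖ → τ₂ ≤ ‖g x - g y‖ ^ 2) (F : Finset X) :
    ∃ g' : X → H, (∀ x ∈ F, ∀ y ∈ F, ‖g' x - g' y‖ ^ 2 ≤ 2 * τ₁ * ‖x - y‖) ∧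
      ∀ x ∈ F, ∀ y ∈ F, D + 2 ≤ ‖x - y‖ →
        (Real.sqrt τ₂ - Real.sqrt (8 * τ₁)) ^ 2 ≤ ‖g' x - g' y‖ ^ 2 := by
  obtain ⟨A, hAF, hsep, hcov⟩ := aux_net F
  obtain ⟨g', h1, h2⟩ := aux_ext (2 * τ₁) (by positivity) g A F (by
    intro a ha b hb
    rcases eq_or_ne a b with rfl | hab
    · simp
    · exact hup _ _ (hsep a ha b hb hab))
  have h2' : ∀ x ∈ F, ∀ y ∈ F, ‖g' x - g' y‖ ^ 2 ≤ 2 * τ₁ * ‖x - y‖ := fun x hx y hy =>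
    h2 x (by simp [hx]) y (by simp [hy])
  refine ⟨g', h2', fun x hx y hy hxy => ?_⟩
  obtain ⟨a, ha, hxa⟩ := hcov x hx
  obtain ⟨b, hb, hyb⟩ := hcov y hy
  have hab : D ≤ ‖a - b‖ := by
    have e : x - y = (x - a) + (a - b) - (y - b) := by abel
    have := norm_sub_le ((x - a) + (a - b)) (y - b)
    have := norm_add_le (x - a) (a - b)
    rw [e] at hxy
    linarith
  have h3 := hlow a b hab
  rw [← h1 a ha, ← h1 b hb] at h3
  have h3' : Real.sqrt τ₂ ≤ ‖g' a - g' b‖ := Real.sqrt_le_iff.2 ⟨norm_nonneg _, h3⟩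
  have s8 : Real.sqrt (8 * τ₁) = 2 * Real.sqrt (2 * τ₁) := by
    rw [show 8 * τ₁ = 2 ^ 2 * (2 * τ₁) by ring, Real.sqrt_mul (by positivity),
      Real.sqrt_sq (by norm_num)]
  have hsmall : ∀ x ∈ F, ∀ a ∈ F, ‖x - a‖ ≤ 1 → ‖g' x - g' a‖ ≤ Real.sqrt (2 * τ₁) := by
    intro x hx a ha h
    refine Real.le_sqrt_of_sq_le ((h2' x hx a ha).trans ?_)
    nlinarith
  have k1 := hsmall x hx a (hAF ha) hxa
  have k2 := hsmall y hy b (hAF hb) hyb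
  have k3 : ‖g' a - g' b‖ ≤ ‖g' x - g' y‖ + ‖g' x - g' a‖ + ‖g' y - g' b‖ := by
    have e : g' a - g' b = (g' x - g' y) - (g' x - g' a) + (g' y - g' b) := by abel
    rw [e]
    exact (norm_add_le _ _).trans (by gcongr; exact norm_sub_le _ _)
  have hpos : 0 ≤ Real.sqrt τ₂ - Real.sqrt (8 * τ₁) :=
    sub_nonneg.2 (Real.sqrt_le_sqrt hτ8.le)
  refine pow_le_pow_left₀ hpos ?_ 2
  linarith

def AuxBox {X : Type u} [NormedAddCommGroup X] (c : ℝ) : Set (X → X → ℝ) :=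
  Set.pi Set.univ fun x => Set.pi Set.univ fun y => Set.Icc 0 (c * ‖x - y‖)

theorem aux_box_compact {X : Type u} [NormedAddCommGroup X] (c : ℝ) :
    IsCompact (AuxBox (X := X) c) :=
  isCompact_univ_pi fun _ => isCompact_univ_pi fun _ => isCompact_Icc

def AuxGood {X : Type u} [NormedAddCommGroup X] (R M : ℝ) : Set (X → X → ℝ) :=
  {K | (∀ x y, K x y = K y x) ∧ AuxNeg K ∧ ∀ x y, R ≤ ‖x - y‖ → M ≤ K x y}

theorem aux_good_closed {X : Type u} [NormedAddCommGroup X] (R M : ℝ) :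
    IsClosed (AuxGood (X := X) R M) := by
  have e : AuxGood (X := X) R M = {K | ∀ x y, K x y = K y x} ∩ ({K | AuxNeg K} ∩
    {K | ∀ x y, R ≤ ‖x - y‖ → M ≤ K x y}) := rfl
  rw [e]
  refine IsClosed.inter ?_ (IsClosed.inter ?_ ?_)
  · simp only [Set.ofPred_forall]
    exact isClosed_iInter fun x => isClosed_iInter fun y =>
      isClosed_eq (by fun_prop) (by fun_prop)
  · simp only [AuxNeg, Set.ofPred_forall]
    exact isClosed_iInter fun n => isClosed_iInter fun x => isClosed_iInter fun c =>
      isClosed_iInter fun _ => isClosed_le (by fun_prop) (by fun_prop)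
  · simp only [Set.ofPred_forall]
    exact isClosed_iInter fun x => isClosed_iInter fun y => isClosed_iInter fun _ =>
      isClosed_le (by fun_prop) (by fun_prop)

theorem aux_sq_neg {X : Type u} {H : Type*} [NormedAddCommGroup H] [InnerProductSpace ℝ H]
    (g : X → H) : AuxNeg (fun x y => ‖g x - g y‖ ^ 2) := by
  intro n x c hc
  have e : ∑ i, ∑ j, c i * c j * ‖g (x i) - g (x j)‖ ^ 2 =
      - 2 * ‖∑ i, c i • g (x i)‖ ^ 2 := by
    have e1 : ‖∑ i, c i • g (x i)‖ ^ 2 =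
        ∑ i, ∑ j, c i * (c j * inner ℝ (g (x i)) (g (x j))) := by
      rw [← real_inner_self_eq_norm_sq, sum_inner]
      simp only [inner_sum, real_inner_smul_left, real_inner_smul_right]
      exact Finset.sum_congr rfl fun i _ => Finset.sum_congr rfl fun j _ => by ring
    have e2 : ∑ i, ∑ j, c i * c j * ‖g (x i)‖ ^ 2 = 0 := by
      rw [Finset.sum_comm]
      refine (Finset.sum_congr rfl fun j _ => ?_).trans (?_ :
        ∑ j, c j * ∑ i, c i * ‖g (x i)‖ ^ 2 = 0)
      · rw [Finset.mul_sum]; exact Finset.sum_congr rfl fun i _ => by ring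
      · rw [← Finset.sum_mul, hc, zero_mul]
    have e3 : ∑ i, ∑ j, c i * c j * ‖g (x j)‖ ^ 2 = 0 := by
      refine (Finset.sum_congr rfl fun j _ => ?_).trans (?_ :
        ∑ j, c j * ∑ i, c i * ‖g (x i)‖ ^ 2 = 0)
      · rw [Finset.mul_sum]; exact Finset.sum_congr rfl fun i _ => by ring
      · rw [← Finset.sum_mul, hc, zero_mul]
    have e4 : ∑ i, ∑ j, c i * c j * ‖g (x i) - g (x j)‖ ^ 2 =
        ∑ i, ∑ j, c i * c j * ‖g (x i)‖ ^ 2 + ∑ i, ∑ j, c i * c j * ‖g (x j)‖ ^ 2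
        - 2 * ∑ i, ∑ j, c i * (c j * inner ℝ (g (x i)) (g (x j))) := by
      simp only [Finset.mul_sum, ← Finset.sum_add_distrib, ← Finset.sum_sub_distrib]
      refine Finset.sum_congr rfl fun i _ => Finset.sum_congr rfl fun j _ => ?_
      rw [norm_sub_sq_real]; ring
    rw [e4, e2, e3, e1]; ring
  rw [e]
  nlinarith [sq_nonneg ‖∑ i, c i • g (x i)‖]

theorem aux_exists_good {X : Type u} [NormedAddCommGroup X] (c R M : ℝ) (hc : 0 ≤ c)
    {H : Type*} [NormedAddCommGroup H] [InnerProductSpace ℝ H]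
    (hF : ∀ F : Finset X, ∃ g' : X → H, (∀ x ∈ F, ∀ y ∈ F, ‖g' x - g' y‖ ^ 2 ≤ c * ‖x - y‖) ∧
      ∀ x ∈ F, ∀ y ∈ F, R ≤ ‖x - y‖ → M ≤ ‖g' x - g' y‖ ^ 2) :
    (AuxBox (X := X) c ∩ AuxGood R M).Nonempty := by
  classical
  let t : Finset X → Set (X → X → ℝ) := fun F =>
    {K | (∀ x ∈ F, ∀ y ∈ F, K x y = K y x)} ∩ ({K | ∀ (n : ℕ) (x : Fin n → X) (c : Fin n → ℝ),
      (∀ i, x i ∈ F) → ∑ i, c i = 0 → ∑ i, ∑ j, c i * c j * K (x i) (x j) ≤ 0} ∩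
      {K | ∀ x ∈ F, ∀ y ∈ F, R ≤ ‖x - y‖ → M ≤ K x y})
  have ht : ∀ F, IsClosed (t F) := by
    intro F
    refine IsClosed.inter ?_ (IsClosed.inter ?_ ?_)
    · simp only [Set.ofPred_forall]
      exact isClosed_iInter fun x => isClosed_iInter fun _ => isClosed_iInter fun y =>
        isClosed_iInter fun _ => isClosed_eq (by fun_prop) (by fun_prop)
    · simp only [Set.ofPred_forall]
      exact isClosed_iInter fun n => isClosed_iInter fun x => isClosed_iInter fun c =>
        isClosed_iInter fun _ => isClosed_iInter fun _ => isClosed_le (by fun_prop) (by fun_prop)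
    · simp only [Set.ofPred_forall]
      exact isClosed_iInter fun x => isClosed_iInter fun _ => isClosed_iInter fun y =>
        isClosed_iInter fun _ => isClosed_iInter fun _ => isClosed_le (by fun_prop) (by fun_prop)
  obtain ⟨K, hK1, hK2⟩ := (aux_box_compact (X := X) c).inter_iInter_nonempty t ht (by
    intro U
    obtain ⟨g, hg1, hg2⟩ := hF (U.biUnion id)
    set F := U.biUnion id with hFdef
    refine ⟨fun x y => if x ∈ F ∧ y ∈ F then ‖g x - g y‖ ^ 2 else 0, ?_, ?_⟩
    · intro x _ y _
      dsimp only
      split_ifs with h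
      · exact ⟨by positivity, hg1 x h.1 y h.2⟩
      · exact ⟨le_rfl, by positivity⟩
    · refine Set.mem_iInter₂.2 fun E hE => ?_
      have hEF : ∀ x ∈ E, x ∈ F := fun x hx => Finset.mem_biUnion.2 ⟨E, hE, hx⟩
      refine ⟨?_, ?_, ?_⟩
      · intro x hx y hy
        simp only [hEF x hx, hEF y hy, and_self, if_true]
        rw [norm_sub_rev]
      · intro n x c hx h0
        simp only [hEF _ (hx _), and_self, if_true]
        exact aux_sq_neg g n x c h0
      · intro x hx y hy h
        simp only [hEF x hx, hEF y hy, and_self, if_true]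
        exact hg2 x (hEF x hx) y (hEF y hy) h)
  rw [Set.mem_iInter] at hK2
  refine ⟨K, hK1, fun x y => ?_, fun n x c h => ?_, fun x y h => ?_⟩
  · exact (hK2 {x, y}).1 x (by simp) y (by simp)
  · exact (hK2 (Finset.univ.image x)).2.1 n x c (by simp) h
  · exact (hK2 {x, y}).2.2 x (by simp) y (by simp) h

noncomputable def auxAvg {X : Type u} [NormedAddCommGroup X] (v : X) (n : ℕ) (K : X → X → ℝ) : X → X → ℝ :=
  fun x y => (∑ k ∈ Finset.range (n + 1), K (x + k • v) (y + k • v)) / (n + 1)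

def AuxInv {X : Type u} [NormedAddCommGroup X] (c : ℝ) (p : X × ℕ) : Set (X → X → ℝ) :=
  {K | ∀ x y, |K (x + p.1) (y + p.1) - K x y| ≤ c * ‖x - y‖ / (p.2 + 1)}

theorem aux_avg_le {n : ℕ} {a : ℕ → ℝ} {b : ℝ} (h : ∀ k, a k ≤ b) :
    (∑ k ∈ Finset.range (n + 1), a k) / ((n : ℝ) + 1) ≤ b := by
  rw [div_le_iff₀ (by positivity)]
  refine (Finset.sum_le_sum fun k _ => h k).trans ?_
  simp [mul_comm]

theorem aux_le_avg {n : ℕ} {a : ℕ → ℝ} {b : ℝ} (h : ∀ k, b ≤ a k) :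
    b ≤ (∑ k ∈ Finset.range (n + 1), a k) / ((n : ℝ) + 1) := by
  rw [le_div_iff₀ (by positivity)]
  refine le_trans ?_ (Finset.sum_le_sum fun k _ => h k)
  simp [mul_comm]

theorem aux_avg_box {X : Type u} [NormedAddCommGroup X] {c : ℝ} (v : X) (n : ℕ)
    {K : X → X → ℝ} (hK : K ∈ AuxBox (X := X) c) : auxAvg v n K ∈ AuxBox (X := X) c := by
  intro x _ y _
  have h : ∀ k : ℕ, K (x + k • v) (y + k • v) ∈ Set.Icc 0 (c * ‖x - y‖) := fun k => by
    have := hK (x + k • v) trivial (y + k • v) trivial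
    simpa only [add_sub_add_right_eq_sub] using this
  exact ⟨aux_le_avg fun k => (h k).1, aux_avg_le fun k => (h k).2⟩

theorem aux_avg_good {X : Type u} [NormedAddCommGroup X] {R M : ℝ} (v : X) (n : ℕ)
    {K : X → X → ℝ} (hK : K ∈ AuxGood (X := X) R M) : auxAvg v n K ∈ AuxGood (X := X) R M := by
  refine ⟨fun x y => ?_, fun m x c hc => ?_, fun x y h => ?_⟩
  · simp only [auxAvg]
    congr 1
    exact Finset.sum_congr rfl fun k _ => hK.1 _ _
  · have e : ∑ i, ∑ j, c i * c j * auxAvg v n K (x i) (x j) =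
        (∑ k ∈ Finset.range (n + 1), ∑ i, ∑ j, c i * c j * K (x i + k • v) (x j + k • v))
          / ((n : ℝ) + 1) := by
      simp only [auxAvg, ← mul_div_assoc, ← Finset.sum_div, Finset.mul_sum]
      congr 1
      rw [Finset.sum_comm]
      have : ∀ j, ∑ i, ∑ k ∈ Finset.range (n + 1), c i * c j * K (x i + k • v) (x j + k • v)
         = ∑ k ∈ Finset.range (n + 1), ∑ i, c i * c j * K (x i + k • v) (x j + k • v) :=
        fun j => Finset.sum_comm
      simp only [this]
      rw [Finset.sum_comm]
      exact Finset.sum_congr rfl fun k _ => Finset.sum_comm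
    rw [e]
    exact aux_avg_le fun k => hK.2.1 m (fun i => x i + k • v) c hc
  · refine aux_le_avg fun k => hK.2.2 _ _ ?_
    rwa [add_sub_add_right_eq_sub]

theorem aux_avg_inv {X : Type u} [NormedAddCommGroup X] {c : ℝ} (v : X) (n : ℕ) (p : X × ℕ)
    {K : X → X → ℝ} (hK : K ∈ AuxInv (X := X) c p) : auxAvg v n K ∈ AuxInv (X := X) c p := by
  intro x y
  have h : ∀ k : ℕ, |K (x + p.1 + k • v) (y + p.1 + k • v) - K (x + k • v) (y + k • v)|
      ≤ c * ‖x - y‖ / (p.2 + 1) := fun k => by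
    have := hK (x + k • v) (y + k • v)
    rwa [add_sub_add_right_eq_sub, add_right_comm, add_right_comm y] at this
  simp only [auxAvg, ← sub_div, ← Finset.sum_sub_distrib]
  rw [abs_le]
  exact ⟨aux_le_avg fun k => (abs_le.1 (h k)).1, aux_avg_le fun k => (abs_le.1 (h k)).2⟩

theorem aux_avg_new {X : Type u} [NormedAddCommGroup X] {c : ℝ} (v : X) (n : ℕ)
    {K : X → X → ℝ} (hK : K ∈ AuxBox (X := X) c) : auxAvg v n K ∈ AuxInv (X := X) c (v, n) := by
  intro x y
  have h : ∀ k : ℕ, K (x + k • v) (y + k • v) ∈ Set.Icc 0 (c * ‖x - y‖) := fun k => by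
    have := hK (x + k • v) trivial (y + k • v) trivial
    simpa only [add_sub_add_right_eq_sub] using this
  have e : ∀ k : ℕ, K (x + v + k • v) (y + v + k • v) = K (x + (k + 1) • v) (y + (k + 1) • v) := by
    intro k
    congr 1
    · rw [add_smul, one_smul]; abel
    · rw [add_smul, one_smul]; abel
  simp only [auxAvg, ← sub_div, ← Finset.sum_sub_distrib, e]
  rw [Finset.sum_range_sub (fun k : ℕ => K (x + k • v) (y + k • v)), abs_div,
    abs_of_pos (by positivity : (0:ℝ) < n + 1)]
  gcongr
  have h1 := h (n + 1)
  have h2 := h 0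
  rw [abs_le]
  constructor <;> linarith [h1.1, h1.2, h2.1, h2.2]

theorem aux_inv_closed {X : Type u} [NormedAddCommGroup X] (c : ℝ) (p : X × ℕ) :
    IsClosed (AuxInv (X := X) c p) := by
  simp only [AuxInv, Set.ofPred_forall]
  exact isClosed_iInter fun x => isClosed_iInter fun y => isClosed_le (by fun_prop) (by fun_prop)

theorem aux_exists_inv {X : Type u} [NormedAddCommGroup X] (c R M : ℝ)
    (h : (AuxBox (X := X) c ∩ AuxGood R M).Nonempty) :
    ∃ K ∈ AuxBox (X := X) c ∩ AuxGood R M, ∀ v x y, K (x + v) (y + v) = K x y := by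
  classical
  obtain ⟨K, hK1, hK2⟩ := ((aux_box_compact (X := X) c).inter_right
    (aux_good_closed R M)).inter_iInter_nonempty (AuxInv c) (aux_inv_closed c) (by
      intro U
      induction U using Finset.induction_on with
      | empty => simpa using h
      | insert p U hp ih =>
        obtain ⟨K, hK1, hK2⟩ := ih
        rw [Set.mem_iInter₂] at hK2
        refine ⟨auxAvg p.1 p.2 K, ⟨aux_avg_box _ _ hK1.1, aux_avg_good _ _ hK1.2⟩, ?_⟩
        refine Set.mem_iInter₂.2 fun q hq => ?_
        rcases Finset.mem_insert.1 hq with rfl | hq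
        · exact aux_avg_new _ _ hK1.1
        · exact aux_avg_inv _ _ _ (hK2 q hq))
  rw [Set.mem_iInter] at hK2
  refine ⟨K, hK1, fun v x y => ?_⟩
  have h1 : ∀ n : ℕ, |K (x + v) (y + v) - K x y| ≤ c * ‖x - y‖ / (n + 1) := fun n => hK2 (v, n) x y
  have h2 : Filter.Tendsto (fun n : ℕ => c * ‖x - y‖ / ((n:ℝ) + 1)) Filter.atTop (nhds 0) := by
    have := (tendsto_one_div_add_atTop_nhds_zero_nat (𝕜 := ℝ)).const_mul (c * ‖x - y‖)
    simpa [div_eq_mul_inv] using this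
  have h3 := ge_of_tendsto' h2 h1
  exact sub_eq_zero.1 (abs_nonpos_iff.1 h3)

theorem stmt_16 {X : Type*} [NormedAddCommGroup X] [NormedSpace ℝ X]
    [FiniteDimensional ℝ X]
    (D τ₁ τ₂ : ℝ) (hD : 1 < D) (hτ0 : 0 < τ₁) (hτ1 : τ₁ < τ₂)
    (hτ8 : 8 * τ₁ < τ₂)
    (hthr : ∃ (H : Type) (_ : NormedAddCommGroup H) (_ : InnerProductSpace ℝ H)
      (_ : CompleteSpace H) (f : X → H),
      (∀ x₁ x₂ : X, ‖x₁ - x₂‖ ≤ 1 → ‖f x₁ - f x₂‖ ≤ τ₁) ∧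
      (∀ x₁ x₂ : X, D ≤ ‖x₁ - x₂‖ → τ₂ ≤ ‖f x₁ - f x₂‖)) :
    ∃ (H' : Type) (_ : NormedAddCommGroup H') (_ : InnerProductSpace ℝ H')
      (_ : CompleteSpace H') (h : X → H'),
      ∀ x₁ x₂ : X,
        (Real.sqrt τ₂ - Real.sqrt (8 * τ₁)) *
            min 1 (‖x₁ - x₂‖ / (2 * D + 4)) ≤ ‖h x₁ - h x₂‖ ∧
        ‖h x₁ - h x₂‖ ≤ Real.sqrt (2 * τ₁ * ‖x₁ - x₂‖) := by
  classical
  obtain ⟨H, i1, i2, i3, f, hf1, hf2⟩ := hthr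
  obtain ⟨H₁, j1, j2, j3, g, hg⟩ := aux_neg_rep (0 : X) (fun x y => ‖f x - f y‖)
    (fun x y => norm_sub_rev _ _) (by simp) (aux_norm_neg f)
  have hup : ∀ x y : X, 1 ≤ ‖x - y‖ → ‖g x - g y‖ ^ 2 ≤ 2 * τ₁ * ‖x - y‖ := by
    intro x y h
    rw [hg]
    have h1 := aux_growth f τ₁ hf1 ⌈‖x - y‖⌉₊ x y (Nat.le_ceil _)
    have h2 := (Nat.ceil_lt_add_one (norm_nonneg (x - y))).le
    nlinarith
  have hlow : ∀ x y : X, D ≤ ‖x - y‖ → τ₂ ≤ ‖g x - g y‖ ^ 2 := by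
    intro x y h
    rw [hg]; exact hf2 x y h
  set C := Real.sqrt τ₂ - Real.sqrt (8 * τ₁) with hC
  have hC0 : 0 ≤ C := sub_nonneg.2 (Real.sqrt_le_sqrt hτ8.le)
  obtain ⟨K, ⟨hK1, hK2⟩, hK3⟩ := aux_exists_inv (2 * τ₁) (D + 2) (C ^ 2)
    (aux_exists_good (2 * τ₁) (D + 2) (C ^ 2) (by positivity)
      (aux_finite D τ₁ τ₂ hτ0 hτ8 g hup hlow))
  have hKb : ∀ x y, 0 ≤ K x y ∧ K x y ≤ 2 * τ₁ * ‖x - y‖ := fun x y => hK1 x trivial y trivial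
  let e := (Module.finBasis ℝ X).equivFun
  obtain ⟨H', k1, k2, k3, h', hh'⟩ := aux_neg_rep
    (0 : Fin (Module.finrank ℝ X) → ℝ) (fun a b => K (e.symm a) (e.symm b))
    (fun a b => hK2.1 _ _)
    (fun a => by
      have := hKb (e.symm a) (e.symm a)
      rw [sub_self, norm_zero, mul_zero] at this
      exact le_antisymm this.2 this.1)
    (fun n x c hc => hK2.2.1 n (fun i => e.symm (x i)) c hc)
  refine ⟨H', k1, k2, k3, fun x => h' (e x), ?_⟩
  have hh : ∀ x y, ‖h' (e x) - h' (e y)‖ ^ 2 = K x y := fun x y => by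
    rw [hh']; simp
  have hinv : ∀ v x y, ‖h' (e (x + v)) - h' (e (y + v))‖ = ‖h' (e x) - h' (e y)‖ := by
    intro v x y
    rw [← sq_eq_sq₀ (norm_nonneg _) (norm_nonneg _), hh, hh, hK3]
  have hfar : ∀ x y : X, D + 2 ≤ ‖x - y‖ → C ≤ ‖h' (e x) - h' (e y)‖ := by
    intro x y hxy
    rw [← sq_le_sq₀ hC0 (norm_nonneg _), hh]
    exact hK2.2.2 x y hxy
  intro x y
  refine ⟨?_, Real.le_sqrt_of_sq_le (by rw [hh]; exact (hKb x y).2)⟩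
  have hchain : ∀ n : ℕ, ‖h' (e (x + n • (x - y))) - h' (e x)‖ ≤ n * ‖h' (e x) - h' (e y)‖ := by
    intro n
    induction n with
    | zero => simp
    | succ n ih =>
      have e1 : ‖h' (e (x + (n + 1) • (x - y))) - h' (e (x + n • (x - y)))‖
          = ‖h' (e x) - h' (e y)‖ := by
        rw [← hinv ((n + 1) • (x - y)) x y]
        congr 4
        rw [add_smul, one_smul]; abel_nf
      have := norm_sub_le_norm_sub_add_norm_sub (h' (e (x + (n + 1) • (x - y))))
        (h' (e (x + n • (x - y)))) (h' (e x))
      push_cast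
      linarith
  rcases le_or_gt (D + 2) ‖x - y‖ with hbig | hsmall
  · refine le_trans ?_ (hfar x y hbig)
    exact mul_le_of_le_one_right hC0 (min_le_left _ _)
  rcases eq_or_lt_of_le (norm_nonneg (x - y)) with h0 | hpos
  · rw [← h0]; simp
  set t := ‖x - y‖ with ht
  set n := ⌈(D + 2) / t⌉₊ with hn
  have hn1 : (D + 2) / t ≤ n := Nat.le_ceil _
  have hn2 : (n : ℝ) < (D + 2) / t + 1 := Nat.ceil_lt_add_one (by positivity)
  have hn3 : (n : ℝ) ≤ (2 * D + 4) / t := by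
    have : 1 ≤ (D + 2) / t := by rw [le_div_iff₀ hpos]; linarith
    have e2 : (2 * D + 4) / t = (D + 2) / t + (D + 2) / t := by ring
    linarith
  have hCn : C ≤ n * ‖h' (e x) - h' (e y)‖ := by
    refine le_trans (hfar _ _ ?_) (hchain n)
    rw [add_sub_cancel_left, ← Nat.cast_smul_eq_nsmul ℝ, norm_smul, ← ht, Real.norm_natCast]
    exact (div_le_iff₀ hpos).1 hn1
  have hD4 : 0 < 2 * D + 4 := by linarith
  have hfin : C ≤ (2 * D + 4) / t * ‖h' (e x) - h' (e y)‖ :=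
    hCn.trans (mul_le_mul_of_nonneg_right hn3 (norm_nonneg _))
  calc C * min 1 (t / (2 * D + 4)) ≤ C * (t / (2 * D + 4)) :=
        mul_le_mul_of_nonneg_left (min_le_right _ _) hC0
    _ ≤ ((2 * D + 4) / t * ‖h' (e x) - h' (e y)‖) * (t / (2 * D + 4)) :=
        mul_le_mul_of_nonneg_right hfin (by positivity)
    _ = ‖h' (e x) - h' (e y)‖ := by field_simp
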